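/- Let E → M be a Courant algebroid with bilinear form ⟨·,·⟩, skew-symmetric bracket ⟦·,·⟧, anchor ρ, and 𝒟 = ρ* ∘ d. Extend the bracket to the 2-term complex C = (C^∞(M) →^𝒟 Γ(E)) by ⟦e,f⟧ = −⟦f,e⟧ = ½⟨e,𝒟f⟩ for e ∈ Γ(E), f ∈ C^∞(M), and ⟦f,g⟧ = 0 for f,g ∈ C^∞(M). Then C carries a semistrict Lie 2-algebra structure C(E) with differential 𝒟, this extended bracket, and Jacobiator J_C(e₁,e₂,e₃) = −T(e₁,e₂,e₃) = −(1/6)(⟨⟦e₁,e₂⟧,e₃⟩ + ⟨⟦e₃,e₁⟧,e₂⟩ + ⟨⟦e₂,e₃⟧,e₁⟩). -/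

import Mathlib

/-!
Write `L_e f = ρ(e) f = ⟨𝒟f, e⟩`, so that `⟦e, f⟧ = ½ L_e f`.  Three facts carry the proof.

* `brack_Dop`: `⟦e, 𝒟f⟧ = ½ 𝒟(L_e f)`.  Pairing invariance of the form (for `e`, `𝒟f`, `e'`) with
  `L_{⟦e,e'⟧} = [L_e, L_{e'}]` and `⟨𝒟f, 𝒟g⟩ = 0` gives this after pairing with every `e'`, and
  the form is nondegenerate.  It says the extended bracket is a chain map.
* `T_Dop`: hence `T(e₁, e₂, 𝒟f) = ¼ [L_{e₁}, L_{e₂}] f`, from which the degree-one homotopy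
  equations are immediate in view of the total antisymmetry of `T`.
* `T_eq`: invariance gives `T(a,b,c) = ½ ⟨⟦a,b⟧,c⟩ - ¼ L_a⟨b,c⟩ + ¼ L_b⟨a,c⟩`.

For the coherence law, put
`R = T(⟦x,y⟧,z,w) - T(⟦x,z⟧,y,w) + T(⟦x,w⟧,y,z) + T(⟦y,z⟧,x,w) - T(⟦y,w⟧,x,z) + T(⟦z,w⟧,x,y)`,
`S = L_x T(y,z,w) - L_y T(x,z,w) + L_z T(x,y,w) - L_w T(x,y,z)` and
`K = ⟨⟦x,y⟧,⟦z,w⟧⟩ - ⟨⟦x,z⟧,⟦y,w⟧⟩ + ⟨⟦x,w⟧,⟦y,z⟧⟩`.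
The law is equivalent to `R = ½ S` (`T_coherence`).  Expanding `T` by definition and applying the Jacobi identity
paired with the fourth argument gives `6 R = 2 K - S`; expanding `T` by `T_eq` gives
`R = K - (3/2) S`.  Eliminating `K` yields `R = ½ S`.
-/

/-!
Background for "Courant algebroids from categorified symplectic geometry".

We work on a real normed vector space `X` (serving as the model for the smooth
manifold `M`); differential `k`-forms are represented as functions
`X → (Fin k → X) → ℝ` which are required (via `IsForm`) to be pointwise
alternating multilinear and smooth, and vector fields as smooth maps `X → X`.
The exterior derivative is given by the standard coordinate-free formula, the
Lie derivative on 1-forms by Cartan's magic formula, and the Lie bracket of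
vector fields by its usual expression.
-/

noncomputable section

open scoped BigOperators

/-- Raw differential `k`-forms on the model space `X`. -/
abbrev RawForm (X : Type*) (k : ℕ) := X → (Fin k → X) → ℝ

variable {X : Type*} [NormedAddCommGroup X] [NormedSpace ℝ X]

/-- A raw `k`-form is an honest (smooth, pointwise alternating multilinear)
differential `k`-form. -/
def IsForm {k : ℕ} (α : RawForm X k) : Prop :=
  (∀ x, ∃ m : X [⋀^Fin k]→ₗ[ℝ] ℝ, ∀ v, α x v = m v) ∧
    ContDiff ℝ (⊤ : ℕ∞) (fun p : X × (Fin k → X) => α p.1 p.2)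

/-- The exterior derivative of a `k`-form:
`(dα)ₓ(v₀,…,v_k) = ∑ i (-1)ⁱ (D_{vᵢ} (y ↦ α_y(v₀,…,v̂ᵢ,…,v_k)))ₓ`. -/
def extD {k : ℕ} (α : RawForm X k) : RawForm X (k + 1) := fun x v =>
  ∑ i : Fin (k + 1),
    (-1 : ℝ) ^ (i : ℕ) * fderiv ℝ (fun y => α y (fun j => v (i.succAbove j))) x (v i)

/-- Interior product of a `(k+1)`-form with a vector field. -/
def iprod {k : ℕ} (v : X → X) (α : RawForm X (k + 1)) : RawForm X k := fun x w =>
  α x (Fin.cons (v x) w)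

/-- Interior product of a 1-form with a vector field, as a scalar function. -/
def iprod1 (v : X → X) (α : RawForm X 1) : X → ℝ := fun x => α x fun _ => v x

/-- The differential of a smooth function, as a 1-form. -/
def dFun (f : X → ℝ) : RawForm X 1 := extD (fun x (_ : Fin 0 → X) => f x)

/-- The Lie derivative of a 1-form along a vector field, via Cartan's formula
`L_v = ι_v ∘ d + d ∘ ι_v`. -/
def lieD (v : X → X) (α : RawForm X 1) : RawForm X 1 :=
  extD (iprod v α) + iprod v (extD α)

/-- The Lie bracket of vector fields. -/
def vfBracket (v w : X → X) : X → X := fun x =>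
  fderiv ℝ w x (v x) - fderiv ℝ v x (w x)

/-- A 2-plectic structure: a closed nondegenerate 3-form. -/
structure TwoPlectic (ω : RawForm X 3) : Prop where
  isForm : IsForm ω
  closed : extD ω = 0
  nondeg : ∀ (x : X) (u : X), (∀ w : Fin 2 → X, ω x (Fin.cons u w) = 0) → u = 0

/-- `α` is a Hamiltonian 1-form with Hamiltonian vector field `v`:
`dα = -ι_v ω`. -/
structure IsHamiltonian (ω : RawForm X 3) (α : RawForm X 1) (v : X → X) : Prop where
  isForm : IsForm α
  smoothVF : ContDiff ℝ (⊤ : ℕ∞) v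
  ham : extD α = -iprod v ω

/-- The bracket `{α,β} = ι_{v_β} ι_{v_α} ω` of Hamiltonian 1-forms (expressed in
terms of their Hamiltonian vector fields). -/
def pbrack (ω : RawForm X 3) (vα vβ : X → X) : RawForm X 1 :=
  iprod vβ (iprod vα ω)

/-- `B(α,β) = ½ (ι_{v_α} β - ι_{v_β} α)`. -/
def Bform (vα vβ : X → X) (α β : RawForm X 1) : X → ℝ := fun x =>
  (1 / 2 : ℝ) * (β x (fun _ => vα x) - α x (fun _ => vβ x))

/-- The triple contraction `ι_{v_α} ι_{v_β} ι_{v_γ} ω`. -/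
def triple (ω : RawForm X 3) (va vb vc : X → X) : X → ℝ :=
  iprod1 va (iprod vb (iprod vc ω))

/-- Sections of the generalized tangent bundle `TM ⊕ T*M`: pairs of a vector
field and a 1-form. -/
abbrev Sec (X : Type*) := (X → X) × RawForm X 1

/-- Smoothness for sections of `TM ⊕ T*M`. -/
def IsSmoothSec (e : Sec X) : Prop := ContDiff ℝ (⊤ : ℕ∞) e.1 ∧ IsForm e.2

/-- The canonical pairing `⟨(v₁,α₁),(v₂,α₂)⟩ = ι_{v₁} α₂ + ι_{v₂} α₁`. -/
def stdPair (e₁ e₂ : Sec X) : X → ℝ := iprod1 e₁.1 e₂.2 + iprod1 e₂.1 e₁.2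

/-- The standard Courant bracket on sections of `TM ⊕ T*M`. -/
def stdBrack (e₁ e₂ : Sec X) : Sec X :=
  (vfBracket e₁.1 e₂.1,
    lieD e₁.1 e₂.2 - lieD e₂.1 e₁.2
      - (1 / 2 : ℝ) • dFun (iprod1 e₁.1 e₂.2 - iprod1 e₂.1 e₁.2))

/-- The `ω`-twisted Courant bracket on sections of `TM ⊕ T*M`. -/
def twBrack (ω : RawForm X 3) (e₁ e₂ : Sec X) : Sec X :=
  (vfBracket e₁.1 e₂.1, (stdBrack e₁ e₂).2 + iprod e₂.1 (iprod e₁.1 ω))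

/-- The operator `𝒟 f = (0, df)` of the standard (or twisted) Courant
algebroid on `TM ⊕ T*M`. -/
def DStd (f : X → ℝ) : Sec X := (0, dFun f)

/-- Multiplication of a section of `TM ⊕ T*M` by a function. -/
def fsmul (f : X → ℝ) (e : Sec X) : Sec X :=
  (fun x => f x • e.1 x, fun x w => f x * e.2 x w)

/-- The Jacobiator `J_C = -T` of the Lie 2-algebra of the `ω`-twisted Courant
algebroid on `TM ⊕ T*M`. -/
def JCtw (ω : RawForm X 3) (e₁ e₂ e₃ : Sec X) : X → ℝ :=
  -((1 / 6 : ℝ) • (stdPair (twBrack ω e₁ e₂) e₃ + stdPair (twBrack ω e₃ e₁) e₂ +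
      stdPair (twBrack ω e₂ e₃) e₁))

/-- The extension of the Courant bracket on `TM ⊕ T*M` to a degree-0 chain and a
degree-1 chain: `⟦e,f⟧ = ½ ⟨e, 𝒟f⟩`. -/
def ebrack01 (e : Sec X) (f : X → ℝ) : X → ℝ := (1 / 2 : ℝ) • stdPair e (DStd f)

/-- The extension of the Courant bracket on `TM ⊕ T*M` to a degree-1 chain and a
degree-0 chain: `⟦f,e⟧ = -⟦e,f⟧`. -/
def ebrack10 (f : X → ℝ) (e : Sec X) : X → ℝ := -ebrack01 e f

/-- A Courant algebroid over the base `X`, presented in terms of its space of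
sections `S` (Roytenberg's definition, with the skew-symmetric bracket).
`pair` is the bilinear form, `brack` the skew-symmetric bracket, `anchor` the
anchor map, `smulF` the `C^∞(M)`-module structure of `Γ(E)`, and `Dop` the
operator `𝒟` characterized by `⟨𝒟f, e⟩ = ρ(e) f`. -/
structure CourantAlgebroid (X : Type*) [NormedAddCommGroup X] [NormedSpace ℝ X]
    (S : Type*) [AddCommGroup S] [Module ℝ S] where
  pair : S → S → X → ℝ
  brack : S → S → S
  anchor : S → X → X
  smulF : (X → ℝ) → S → S
  Dop : (X → ℝ) → S
  pair_symm : ∀ e₁ e₂, pair e₁ e₂ = pair e₂ e₁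
  pair_add_left : ∀ e₁ e₂ e₃, pair (e₁ + e₂) e₃ = pair e₁ e₃ + pair e₂ e₃
  pair_smul_left : ∀ (c : ℝ) (e₁ e₂ : S), pair (c • e₁) e₂ = c • pair e₁ e₂
  pair_smooth : ∀ e₁ e₂, ContDiff ℝ (⊤ : ℕ∞) (pair e₁ e₂)
  pair_nondeg : ∀ e, (∀ e', pair e e' = 0) → e = 0
  brack_skew : ∀ e₁ e₂, brack e₁ e₂ = -brack e₂ e₁
  brack_add_left : ∀ e₁ e₂ e₃, brack (e₁ + e₂) e₃ = brack e₁ e₃ + brack e₂ e₃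
  brack_smul_left : ∀ (c : ℝ) (e₁ e₂ : S), brack (c • e₁) e₂ = c • brack e₁ e₂
  anchor_add : ∀ e₁ e₂, anchor (e₁ + e₂) = anchor e₁ + anchor e₂
  anchor_smul : ∀ (c : ℝ) (e : S), anchor (c • e) = c • anchor e
  anchor_smooth : ∀ e, ContDiff ℝ (⊤ : ℕ∞) (anchor e)
  anchor_smulF : ∀ (f : X → ℝ) (e : S), ContDiff ℝ (⊤ : ℕ∞) f →
    anchor (smulF f e) = fun x => f x • anchor e x
  pair_smulF : ∀ (f : X → ℝ) (e₁ e₂ : S), ContDiff ℝ (⊤ : ℕ∞) f →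
    pair (smulF f e₁) e₂ = f * pair e₁ e₂
  Dop_add : ∀ f g : X → ℝ, ContDiff ℝ (⊤ : ℕ∞) f → ContDiff ℝ (⊤ : ℕ∞) g →
    Dop (f + g) = Dop f + Dop g
  Dop_smul : ∀ (c : ℝ) (f : X → ℝ), ContDiff ℝ (⊤ : ℕ∞) f → Dop (c • f) = c • Dop f
  pair_Dop : ∀ f : X → ℝ, ContDiff ℝ (⊤ : ℕ∞) f → ∀ e,
    pair (Dop f) e = fun x => fderiv ℝ f x (anchor e x)
  /-- Axiom (1): the Jacobi identity up to `-𝒟T`. -/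
  jacobi : ∀ e₁ e₂ e₃,
    brack e₁ (brack e₂ e₃) - brack (brack e₁ e₂) e₃ - brack e₂ (brack e₁ e₃)
      = -Dop ((1 / 6 : ℝ) •
          (pair (brack e₁ e₂) e₃ + pair (brack e₃ e₁) e₂ + pair (brack e₂ e₃) e₁))
  /-- Axiom (2): the anchor preserves brackets. -/
  anchor_brack : ∀ e₁ e₂, anchor (brack e₁ e₂) = vfBracket (anchor e₁) (anchor e₂)
  /-- Axiom (3): the Leibniz rule with correction term `-½⟨e₁,e₂⟩𝒟f`. -/
  leibniz : ∀ (e₁ : S) (f : X → ℝ) (e₂ : S), ContDiff ℝ (⊤ : ℕ∞) f →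
    brack e₁ (smulF f e₂)
      = smulF f (brack e₁ e₂) + smulF (fun x => fderiv ℝ f x (anchor e₁ x)) e₂
        - smulF ((1 / 2 : ℝ) • pair e₁ e₂) (Dop f)
  /-- Axiom (4): `⟨𝒟f, 𝒟g⟩ = 0`. -/
  pair_Dop_Dop : ∀ f g : X → ℝ, ContDiff ℝ (⊤ : ℕ∞) f → ContDiff ℝ (⊤ : ℕ∞) g →
    pair (Dop f) (Dop g) = 0
  /-- Axiom (5): invariance of the bilinear form. -/
  invariance : ∀ e₁ e₂ e₃,
    (fun x => fderiv ℝ (pair e₂ e₃) x (anchor e₁ x))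
      = pair (brack e₁ e₂ + (1 / 2 : ℝ) • Dop (pair e₁ e₂)) e₃
        + pair e₂ (brack e₁ e₃ + (1 / 2 : ℝ) • Dop (pair e₁ e₃))

/-- An exact Courant algebroid: `0 → T*M → E → TM → 0` is exact, with
`ρ* : T*M → E` the dual of the anchor via the bilinear form, so that
`⟨ρ*(α), e⟩ = α(ρ(e))`. -/
structure ExactCourantAlgebroid (X : Type*) [NormedAddCommGroup X] [NormedSpace ℝ X]
    (S : Type*) [AddCommGroup S] [Module ℝ S] extends CourantAlgebroid X S where
  rhoStar : RawForm X 1 → S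
  rhoStar_add : ∀ α β : RawForm X 1, IsForm α → IsForm β → rhoStar (α + β) = rhoStar α + rhoStar β
  pair_rhoStar : ∀ α : RawForm X 1, IsForm α → ∀ e,
    pair (rhoStar α) e = fun x => α x fun _ => anchor e x
  rhoStar_inj : ∀ α β : RawForm X 1, IsForm α → IsForm β → rhoStar α = rhoStar β → α = β
  anchor_rhoStar : ∀ α : RawForm X 1, IsForm α → anchor (rhoStar α) = 0
  anchor_surj : ∀ v : X → X, ContDiff ℝ (⊤ : ℕ∞) v → ∃ e, anchor e = v
  ker_sub_range : ∀ e, anchor e = 0 → ∃ α : RawForm X 1, IsForm α ∧ e = rhoStar α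

/-- A connection on an exact Courant algebroid: a bundle map `A : TM → E`
with `ρ ∘ A = id` and isotropic image. -/
structure CAConnection {X : Type*} [NormedAddCommGroup X] [NormedSpace ℝ X]
    {S : Type*} [AddCommGroup S] [Module ℝ S] (C : ExactCourantAlgebroid X S) where
  map : (X → X) → S
  map_add : ∀ v w : X → X, ContDiff ℝ (⊤ : ℕ∞) v → ContDiff ℝ (⊤ : ℕ∞) w →
    map (v + w) = map v + map w
  map_smulF : ∀ (f : X → ℝ) (v : X → X), ContDiff ℝ (⊤ : ℕ∞) f → ContDiff ℝ (⊤ : ℕ∞) v →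
    map (fun x => f x • v x) = C.smulF f (map v)
  anchor_map : ∀ v : X → X, ContDiff ℝ (⊤ : ℕ∞) v → C.anchor (map v) = v
  isotropic : ∀ v w : X → X, C.pair (map v) (map w) = 0
/-- The function `T` of a Courant algebroid. -/
def CourantAlgebroid.T {X : Type*} [NormedAddCommGroup X] [NormedSpace ℝ X]
    {S : Type*} [AddCommGroup S] [Module ℝ S]
    (C : CourantAlgebroid X S) (e₁ e₂ e₃ : S) : X → ℝ :=
  (1 / 6 : ℝ) •
    (C.pair (C.brack e₁ e₂) e₃ + C.pair (C.brack e₃ e₁) e₂ + C.pair (C.brack e₂ e₃) e₁)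

/-- The Jacobiator `J_C = -T` of the Lie 2-algebra of a Courant algebroid. -/
def CourantAlgebroid.JC {X : Type*} [NormedAddCommGroup X] [NormedSpace ℝ X]
    {S : Type*} [AddCommGroup S] [Module ℝ S]
    (C : CourantAlgebroid X S) (e₁ e₂ e₃ : S) : X → ℝ :=
  -C.T e₁ e₂ e₃

/-- The extended bracket `⟦e, f⟧ = ½⟨e, 𝒟f⟩` of a degree-0 chain and a
degree-1 chain. -/
def CourantAlgebroid.br01 {X : Type*} [NormedAddCommGroup X] [NormedSpace ℝ X]
    {S : Type*} [AddCommGroup S] [Module ℝ S]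
    (C : CourantAlgebroid X S) (e : S) (f : X → ℝ) : X → ℝ :=
  (1 / 2 : ℝ) • C.pair e (C.Dop f)

/-- The extended bracket `⟦f, e⟧ = -⟦e, f⟧` of a degree-1 chain and a
degree-0 chain. -/
def CourantAlgebroid.br10 {X : Type*} [NormedAddCommGroup X] [NormedSpace ℝ X]
    {S : Type*} [AddCommGroup S] [Module ℝ S]
    (C : CourantAlgebroid X S) (f : X → ℝ) (e : S) : X → ℝ :=
  -C.br01 e f

namespace CourantAlgebroid

variable {S : Type*} [AddCommGroup S] [Module ℝ S] (C : CourantAlgebroid X S)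

/-- The derivative `L_e f = ρ(e) f` of a function along the anchor of a section. -/
def lie (e : S) (f : X → ℝ) : X → ℝ := fun x => fderiv ℝ f x (C.anchor e x)

lemma lie_smooth (e : S) {f : X → ℝ} (hf : ContDiff ℝ (⊤ : ℕ∞) f) :
    ContDiff ℝ (⊤ : ℕ∞) (C.lie e f) :=
  (hf.fderiv_right (m := ((⊤ : ℕ∞) : WithTop ℕ∞)) (by simp)).clm_apply (C.anchor_smooth e)

lemma differentiable_of_smooth {f : X → ℝ} (hf : ContDiff ℝ (⊤ : ℕ∞) f) : Differentiable ℝ f :=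
  hf.differentiable (by simp)

lemma lie_add (e : S) {f g : X → ℝ} (hf : ContDiff ℝ (⊤ : ℕ∞) f) (hg : ContDiff ℝ (⊤ : ℕ∞) g) :
    C.lie e (f + g) = C.lie e f + C.lie e g := by
  ext x
  simp [lie, fderiv_add (differentiable_of_smooth hf x) (differentiable_of_smooth hg x)]

lemma lie_smul (e : S) (c : ℝ) {f : X → ℝ} (hf : ContDiff ℝ (⊤ : ℕ∞) f) :
    C.lie e (c • f) = c • C.lie e f := by
  ext x
  simp [lie, fderiv_const_smul (differentiable_of_smooth hf x)]

lemma lie_neg (e : S) (f : X → ℝ) : C.lie e (-f) = -C.lie e f := by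
  ext x
  simp [lie, fderiv_neg]

/-- Since the anchor preserves brackets, `L_{⟦a,b⟧} = [L_a, L_b]`; this is where the symmetry of
the second derivative enters. -/
lemma lie_brack (a b : S) {f : X → ℝ} (hf : ContDiff ℝ (⊤ : ℕ∞) f) :
    C.lie (C.brack a b) f = C.lie a (C.lie b f) - C.lie b (C.lie a f) := by
  ext x
  have hf' : DifferentiableAt ℝ (fderiv ℝ f) x :=
    (hf.fderiv_right (m := ((⊤ : ℕ∞) : WithTop ℕ∞)) (by simp)).differentiable (by simp) x
  have hd : ∀ e : S, DifferentiableAt ℝ (C.anchor e) x :=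
    fun e => (C.anchor_smooth e).differentiable (by simp) x
  have hsymm := (hf.contDiffAt (x := x)).isSymmSndFDerivAt
    (by simpa using WithTop.coe_le_coe.2 (le_top : (2 : ℕ∞) ≤ ⊤))
    (C.anchor a x) (C.anchor b x)
  have key : ∀ p q : S, C.lie p (C.lie q f) x
      = fderiv ℝ (fderiv ℝ f) x (C.anchor p x) (C.anchor q x)
        + fderiv ℝ f x (fderiv ℝ (C.anchor q) x (C.anchor p x)) := by
    intro p q
    have h : fderiv ℝ (C.lie q f) x = _ := fderiv_clm_apply hf' (hd q)
    change fderiv ℝ (C.lie q f) x (C.anchor p x) = _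
    rw [h]
    simp [add_comm]
  rw [Pi.sub_apply, key, key, lie, C.anchor_brack, vfBracket, map_sub, hsymm]
  ring

lemma pair_Dop_left {f : X → ℝ} (hf : ContDiff ℝ (⊤ : ℕ∞) f) (e : S) :
    C.pair (C.Dop f) e = C.lie e f := C.pair_Dop f hf e

lemma pair_Dop_right {f : X → ℝ} (hf : ContDiff ℝ (⊤ : ℕ∞) f) (e : S) :
    C.pair e (C.Dop f) = C.lie e f := by rw [C.pair_symm, C.pair_Dop_left hf]

lemma pair_neg_left (a b : S) : C.pair (-a) b = -C.pair a b := by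
  rw [← neg_one_smul ℝ a, C.pair_smul_left, neg_one_smul]

lemma pair_sub_left (a b c : S) : C.pair (a - b) c = C.pair a c - C.pair b c := by
  rw [sub_eq_add_neg, C.pair_add_left, C.pair_neg_left, sub_eq_add_neg]

lemma pair_add_right (a b c : S) : C.pair a (b + c) = C.pair a b + C.pair a c := by
  rw [C.pair_symm, C.pair_add_left, C.pair_symm b, C.pair_symm c]

lemma pair_smul_right (r : ℝ) (a b : S) : C.pair a (r • b) = r • C.pair a b := by
  rw [C.pair_symm, C.pair_smul_left, C.pair_symm]

lemma T_smooth (a b c : S) : ContDiff ℝ (⊤ : ℕ∞) (C.T a b c) :=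
  contDiff_const.smul
    (((C.pair_smooth _ _).add (C.pair_smooth _ _)).add (C.pair_smooth _ _))

lemma pair_brack_skew (a b c : S) (p : X) :
    C.pair (C.brack a b) c p = -C.pair (C.brack b a) c p := by
  rw [C.brack_skew a b, C.pair_neg_left, Pi.neg_apply]

lemma T_apply (a b c : S) (p : X) : C.T a b c p = (1 / 6) * (C.pair (C.brack a b) c p
    + C.pair (C.brack c a) b p + C.pair (C.brack b c) a p) := by
  simp [T]

lemma T_swap₁₂ (a b c : S) : C.T a b c = -C.T b a c := by
  ext p
  rw [Pi.neg_apply, T_apply, T_apply, C.pair_brack_skew b a, C.pair_brack_skew c b,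
    C.pair_brack_skew a c]
  ring

lemma T_swap₂₃ (a b c : S) : C.T a b c = -C.T a c b := by
  ext p
  rw [Pi.neg_apply, T_apply, T_apply, C.pair_brack_skew b a, C.pair_brack_skew c b,
    C.pair_brack_skew a c]
  ring

lemma T_cyclic (a b c : S) : C.T a b c = C.T b c a := by
  rw [C.T_swap₁₂, C.T_swap₂₃, neg_neg]

/-- Axiom (5) with `𝒟` expressed through derivatives along the anchor. -/
lemma invariance_apply (a b c : S) (p : X) :
    C.lie a (C.pair b c) p = C.pair (C.brack a b) c p + (1 / 2) * C.lie c (C.pair a b) p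
      + (C.pair (C.brack a c) b p + (1 / 2) * C.lie b (C.pair a c) p) := by
  have h := congrFun (C.invariance a b c) p
  rw [C.pair_add_left, C.pair_smul_left, C.pair_add_right, C.pair_smul_right,
    C.pair_Dop_left (C.pair_smooth _ _), C.pair_Dop_right (C.pair_smooth _ _),
    C.pair_symm b (C.brack a c)] at h
  exact h

lemma T_eq (a b c : S) (p : X) : C.T a b c p = (1 / 2) * C.pair (C.brack a b) c p
    - (1 / 4) * C.lie a (C.pair b c) p + (1 / 4) * C.lie b (C.pair a c) p := by
  have h₁ := C.invariance_apply a b c p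
  have h₂ := C.invariance_apply b a c p
  rw [C.pair_symm b a] at h₂
  rw [T_apply]
  linarith [C.pair_brack_skew b a c p, C.pair_brack_skew c a b p]

lemma brack_Dop (e : S) {f : X → ℝ} (hf : ContDiff ℝ (⊤ : ℕ∞) f) :
    C.brack e (C.Dop f) = (1 / 2 : ℝ) • C.Dop (C.lie e f) := by
  rw [← sub_eq_zero]
  refine C.pair_nondeg _ fun e' => ?_
  ext p
  have h := C.invariance_apply e (C.Dop f) e' p
  have hD : C.lie (C.Dop f) (C.pair e e') = 0 := by
    rw [← C.pair_Dop_left (C.pair_smooth e e')]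
    exact C.pair_Dop_Dop _ _ (C.pair_smooth e e') hf
  rw [hD, C.pair_Dop_left hf, C.pair_Dop_right hf, C.pair_Dop_right hf, C.lie_brack _ _ hf] at h
  rw [C.pair_sub_left, C.pair_smul_left, C.pair_Dop_left (C.lie_smooth e hf)]
  simp only [Pi.sub_apply, Pi.smul_apply, Pi.zero_apply, smul_eq_mul] at h ⊢
  linarith

lemma T_Dop (a b : S) {f : X → ℝ} (hf : ContDiff ℝ (⊤ : ℕ∞) f) (p : X) :
    C.T a b (C.Dop f) p = (1 / 4) * (C.lie a (C.lie b f) p - C.lie b (C.lie a f) p) := by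
  rw [T_apply, C.pair_brack_skew (C.Dop f), C.brack_Dop a hf, C.brack_Dop b hf,
    C.pair_smul_left, C.pair_smul_left, C.pair_Dop_left (C.lie_smooth a hf),
    C.pair_Dop_left (C.lie_smooth b hf), C.pair_Dop_right hf, C.lie_brack _ _ hf]
  simp only [Pi.sub_apply, Pi.smul_apply, smul_eq_mul]
  ring

lemma br01_eq (e : S) {f : X → ℝ} (hf : ContDiff ℝ (⊤ : ℕ∞) f) :
    C.br01 e f = (1 / 2 : ℝ) • C.lie e f := by
  rw [br01, C.pair_Dop_right hf]

lemma br01_smooth (e : S) {f : X → ℝ} (hf : ContDiff ℝ (⊤ : ℕ∞) f) :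
    ContDiff ℝ (⊤ : ℕ∞) (C.br01 e f) := by
  rw [C.br01_eq e hf]
  exact contDiff_const.smul (C.lie_smooth e hf)

lemma br10_smooth (e : S) {f : X → ℝ} (hf : ContDiff ℝ (⊤ : ℕ∞) f) :
    ContDiff ℝ (⊤ : ℕ∞) (C.br10 f e) := (C.br01_smooth e hf).neg

lemma br01_br01 (a b : S) {f : X → ℝ} (hf : ContDiff ℝ (⊤ : ℕ∞) f) (p : X) :
    C.br01 a (C.br01 b f) p = (1 / 4) * C.lie a (C.lie b f) p := by
  rw [C.br01_eq a (C.br01_smooth b hf), C.br01_eq b hf, C.lie_smul _ _ (C.lie_smooth b hf)]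
  simp only [Pi.smul_apply, smul_eq_mul]
  ring

lemma br01_neg (a : S) {f : X → ℝ} (hf : ContDiff ℝ (⊤ : ℕ∞) f) :
    C.br01 a (-f) = -C.br01 a f := by
  rw [C.br01_eq a hf, C.br01_eq a (f := -f) hf.neg, C.lie_neg, smul_neg]

lemma br01_brack (a b : S) {f : X → ℝ} (hf : ContDiff ℝ (⊤ : ℕ∞) f) (p : X) :
    C.br01 (C.brack a b) f p = (1 / 2) * (C.lie a (C.lie b f) p - C.lie b (C.lie a f) p) := by
  rw [C.br01_eq _ hf, C.lie_brack _ _ hf]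
  rfl

lemma Dop_neg {f : X → ℝ} (hf : ContDiff ℝ (⊤ : ℕ∞) f) : C.Dop (-f) = -C.Dop f := by
  rw [← neg_one_smul ℝ f, C.Dop_smul _ _ hf, neg_one_smul]

lemma lie_T (d a b c : S) (p : X) : C.lie d (C.T a b c) p = (1 / 6) *
    (C.lie d (C.pair (C.brack a b) c) p - C.lie d (C.pair (C.brack a c) b) p
      + C.lie d (C.pair (C.brack b c) a) p) := by
  have h₁ := C.pair_smooth (C.brack a b) c
  have h₂ := C.pair_smooth (C.brack c a) b
  have h₃ := C.pair_smooth (C.brack b c) a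
  have h₁₂ : ContDiff ℝ (⊤ : ℕ∞) (C.pair (C.brack a b) c + C.pair (C.brack c a) b) := h₁.add h₂
  rw [T, C.lie_smul _ _ (f := _ + _) (h₁₂.add h₃), C.lie_add _ h₁₂ h₃, C.lie_add _ h₁ h₂,
    C.brack_skew c a, C.pair_neg_left, C.lie_neg]
  rfl

/-- The Jacobi identity, with all outer brackets written on the left, paired with a section. -/
lemma pair_jacobi (a b c d : S) (p : X) :
    C.pair (C.brack (C.brack a b) c) d p - C.pair (C.brack (C.brack a c) b) d p
      + C.pair (C.brack (C.brack b c) a) d p = C.lie d (C.T a b c) p := by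
  have h : C.pair (C.brack a (C.brack b c) - C.brack (C.brack a b) c - C.brack b (C.brack a c)) d p
      = C.pair (-C.Dop (C.T a b c)) d p := by rw [C.jacobi]; rfl
  rw [C.pair_sub_left, C.pair_sub_left, C.pair_neg_left, C.pair_Dop_left (C.T_smooth a b c)] at h
  simp only [Pi.sub_apply, Pi.neg_apply] at h
  linarith [C.pair_brack_skew a (C.brack b c) d p, C.pair_brack_skew b (C.brack a c) d p]

lemma T_brack_apply (a b c d : S) (p : X) : C.T (C.brack a b) c d p
    = (1 / 6) * (C.pair (C.brack (C.brack a b) c) d p - C.pair (C.brack (C.brack a b) d) c p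
      + C.pair (C.brack a b) (C.brack c d) p) := by
  rw [T_apply, C.pair_brack_skew d, C.pair_symm (C.brack c d)]
  ring

lemma T_brack_eq (a b c d : S) (p : X) : C.T (C.brack a b) c d p
    = (1 / 2) * C.pair (C.brack a b) (C.brack c d) p
      - (1 / 4) * C.lie c (C.pair (C.brack a b) d) p
      + (1 / 4) * C.lie d (C.pair (C.brack a b) c) p := by
  rw [C.T_cyclic, C.T_eq, C.pair_symm (C.brack a b), C.pair_symm (C.brack a b),
    C.pair_symm (C.brack a b)]

/-- The coherence law for `T`: six times the left side is `2 K - D` by the Jacobi identity, and the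
left side itself is `K - (3/2) D` by invariance, where `D` is twice the right side. -/
lemma T_coherence (x y z w : S) (p : X) :
    C.T (C.brack x y) z w p - C.T (C.brack x z) y w p + C.T (C.brack x w) y z p
      + C.T (C.brack y z) x w p - C.T (C.brack y w) x z p + C.T (C.brack z w) x y p
    = (1 / 2) * (C.lie x (C.T y z w) p - C.lie y (C.T x z w) p
        + C.lie z (C.T x y w) p - C.lie w (C.T x y z) p) := by
  set R := C.T (C.brack x y) z w p - C.T (C.brack x z) y w p + C.T (C.brack x w) y z p
    + C.T (C.brack y z) x w p - C.T (C.brack y w) x z p + C.T (C.brack z w) x y p with hR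
  set D := C.lie x (C.T y z w) p - C.lie y (C.T x z w) p
    + C.lie z (C.T x y w) p - C.lie w (C.T x y z) p with hD
  set K := C.pair (C.brack x y) (C.brack z w) p - C.pair (C.brack x z) (C.brack y w) p
    + C.pair (C.brack x w) (C.brack y z) p with hK
  have s₁ := congrFun (C.pair_symm (C.brack z w) (C.brack x y)) p
  have s₂ := congrFun (C.pair_symm (C.brack y w) (C.brack x z)) p
  have s₃ := congrFun (C.pair_symm (C.brack y z) (C.brack x w)) p
  have jacobi_expansion : 6 * R = 2 * K - D := by
    rw [hR, hK, hD, ← C.pair_jacobi y z w x, ← C.pair_jacobi x z w y, ← C.pair_jacobi x y w z,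
      ← C.pair_jacobi x y z w]
    simp only [T_brack_apply, s₁, s₂, s₃]
    ring
  have invariance_expansion : R = K - (3 / 2) * D := by
    rw [hR, hK, hD]
    simp only [lie_T, T_brack_eq, s₁, s₂, s₃]
    ring
  linarith

end CourantAlgebroid

/-- Theorem 11: a Courant algebroid `E` yields a semistrict
Lie 2-algebra `C(E)` on the complex `C^∞(M) → Γ(E)` with differential `𝒟`,
the extended bracket, and Jacobiator `J_C = -T`.  The conjunction expresses:
the extended bracket is a chain map, `J_C` is an antisymmetric chain homotopy
from `(e₁,e₂,e₃) ↦ ⟦e₁,⟦e₂,e₃⟧⟧` to `(e₁,e₂,e₃) ↦ ⟦⟦e₁,e₂⟧,e₃⟧ + ⟦e₂,⟦e₁,e₃⟧⟧`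
(in both degrees), and the Lie 2-algebra coherence law holds. -/
theorem courant_lie2Algebra
    {S : Type*} [AddCommGroup S] [Module ℝ S] (C : CourantAlgebroid X S) :
    -- the extended bracket is a chain map: 𝒟⟦e,f⟧ = ⟦e, 𝒟f⟧
    (∀ (e : S) (f : X → ℝ), ContDiff ℝ (⊤ : ℕ∞) f →
      C.Dop (C.br01 e f) = C.brack e (C.Dop f)) ∧
    -- the Jacobiator is antisymmetric
    (∀ e₁ e₂ e₃ : S,
      C.JC e₁ e₂ e₃ = -C.JC e₂ e₁ e₃ ∧ C.JC e₁ e₂ e₃ = -C.JC e₁ e₃ e₂) ∧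
    -- chain homotopy, degree 0
    (∀ e₁ e₂ e₃ : S,
      C.brack e₁ (C.brack e₂ e₃) - C.brack (C.brack e₁ e₂) e₃ - C.brack e₂ (C.brack e₁ e₃)
        = C.Dop (C.JC e₁ e₂ e₃)) ∧
    -- chain homotopy, degree 1 (first slot)
    (∀ (f : X → ℝ) (e₂ e₃ : S), ContDiff ℝ (⊤ : ℕ∞) f →
      C.br10 f (C.brack e₂ e₃) - C.br10 (C.br10 f e₂) e₃ - C.br01 e₂ (C.br10 f e₃)
        = C.JC (C.Dop f) e₂ e₃) ∧
    -- chain homotopy, degree 1 (second slot)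
    (∀ (e₁ : S) (f : X → ℝ) (e₃ : S), ContDiff ℝ (⊤ : ℕ∞) f →
      C.br01 e₁ (C.br10 f e₃) - C.br10 (C.br01 e₁ f) e₃ - C.br10 f (C.brack e₁ e₃)
        = C.JC e₁ (C.Dop f) e₃) ∧
    -- chain homotopy, degree 1 (third slot)
    (∀ (e₁ e₂ : S) (f : X → ℝ), ContDiff ℝ (⊤ : ℕ∞) f →
      C.br01 e₁ (C.br01 e₂ f) - C.br01 (C.brack e₁ e₂) f - C.br01 e₂ (C.br01 e₁ f)
        = C.JC e₁ e₂ (C.Dop f)) ∧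
    -- the coherence law
    (∀ x y z w : S,
      C.br01 x (C.JC y z w) + C.JC x (C.brack y z) w + C.JC x z (C.brack y w)
          + C.br10 (C.JC x y z) w + C.br01 z (C.JC x y w)
        = C.JC x y (C.brack z w) + C.JC (C.brack x y) z w + C.br01 y (C.JC x z w)
          + C.JC y (C.brack x z) w + C.JC y z (C.brack x w)) := by
  refine ⟨fun e f hf => ?_, fun a b c => ⟨?_, ?_⟩, fun a b c => ?_, fun f b c hf => ?_,
    fun a f c hf => ?_, fun a b f hf => ?_, fun x y z w => ?_⟩
  · rw [C.br01_eq e hf, C.Dop_smul _ _ (C.lie_smooth e hf), C.brack_Dop e hf]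
  · simp only [CourantAlgebroid.JC]
    rw [C.T_swap₁₂]
  · simp only [CourantAlgebroid.JC]
    rw [C.T_swap₂₃]
  · rw [CourantAlgebroid.JC, C.Dop_neg (C.T_smooth a b c)]
    exact C.jacobi a b c
  · ext p
    simp only [CourantAlgebroid.JC, CourantAlgebroid.br10, Pi.sub_apply, Pi.neg_apply]
    rw [C.br01_neg _ (C.br01_smooth _ hf), C.br01_neg _ (C.br01_smooth _ hf), C.T_cyclic]
    simp only [Pi.neg_apply, C.br01_br01 _ _ hf, C.br01_brack _ _ hf, C.T_Dop _ _ hf]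
    ring
  · ext p
    simp only [CourantAlgebroid.JC, CourantAlgebroid.br10, Pi.sub_apply, Pi.neg_apply]
    rw [C.br01_neg _ (C.br01_smooth _ hf), C.T_swap₂₃]
    simp only [Pi.neg_apply, C.br01_br01 _ _ hf, C.br01_brack _ _ hf, C.T_Dop _ _ hf]
    ring
  · ext p
    simp only [CourantAlgebroid.JC, Pi.sub_apply, Pi.neg_apply]
    simp only [C.br01_br01 _ _ hf, C.br01_brack _ _ hf, C.T_Dop _ _ hf]
    ring
  · ext p
    have hbr : ∀ d a b c : S, C.br01 d (C.JC a b c) p = -((1 / 2) * C.lie d (C.T a b c) p) := by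
      intro d a b c
      rw [CourantAlgebroid.JC, C.br01_neg _ (C.T_smooth a b c), C.br01_eq _ (C.T_smooth a b c)]
      rfl
    simp only [CourantAlgebroid.br10, Pi.add_apply, Pi.neg_apply, hbr]
    simp only [CourantAlgebroid.JC, Pi.neg_apply]
    have h := C.T_coherence x y z w p
    -- Bring the inner bracket of every term into the first slot of `T`.
    rw [C.T_swap₁₂ x (C.brack y z) w, C.T_cyclic x z (C.brack y w), C.T_cyclic z _ x,
      C.T_cyclic x y (C.brack z w), C.T_cyclic y _ x, C.T_swap₁₂ y (C.brack x z) w,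
      C.T_cyclic y z (C.brack x w), C.T_cyclic z _ y]
    simp only [Pi.neg_apply]
    linarith
end
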